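/- For every set A ⊆ 𝔽_p with |A+A| ≤ K|A| there exists a generalized arithmetic progression P of dimension d ≤ C(K) with |P| ≤ e^{C(K)}|A| containing A, where C(K) depends only on K (and one may take C(K) = (log 2K)^{3+o(1)}). -/

import Mathlib

open Finset Pointwise

/-!
If `|A + A| ≤ K|A|` then `|8A - 8A| ≤ K ^ 16 |A|` by Plünnecke's inequality, so by Ruzsa's modelling
argument a positive proportion of `A` is Freiman isomorphic of order `8` to a subset `T` of `ℤ/N`,
`N = |8A - 8A|`, which has positive density there. By Bogolyubov's Fourier argument `2T - 2T`
contains a Bohr set whose rank depends only on `K`. The points of the Bohr set lift to short vectors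
of a lattice in a Euclidean space; splitting off a shortest vector and projecting along it, one
dimension at a time, fills a constant proportion of a ball of the lattice by a proper progression.
The isomorphism carries this progression back to some `Q ⊆ 2A - 2A` with `|A| ≪ |Q|`, and Ruzsa's
covering lemma gives `A ⊆ F + (Q - Q)` with `|F|` bounded; finally `F` lies in the cube
`∑ f ∈ F, {0, f}`.
-/

section Pluennecke

variable {G : Type*} [AddCommGroup G] [DecidableEq G] {A : Finset G}

lemma card_le_card_nsmul_sub_nsmul (hA : A.Nonempty) {m : ℕ} (hm : m ≠ 0) (n : ℕ) :
    #A ≤ #(m • A - n • A) := by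
  obtain ⟨m, rfl⟩ := Nat.exists_eq_succ_of_ne_zero hm
  rw [Nat.succ_eq_add_one, succ_nsmul', add_sub_assoc]
  exact card_le_card_add_right (hA.nsmul.sub hA.nsmul)

lemma pos_of_card_add_le {K : ℝ} (hA : A.Nonempty) (hK : (#(A + A) : ℝ) ≤ K * #A) : 0 < K :=
  pos_of_mul_pos_left ((Nat.cast_pos.2 (hA.add hA).card_pos).trans_le hK) (Nat.cast_nonneg _)

lemma card_nsmul_sub_nsmul_le {K : ℝ} (hA : A.Nonempty) (hK : (#(A + A) : ℝ) ≤ K * #A) (m n : ℕ) :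
    (#(m • A - n • A) : ℝ) ≤ K ^ (m + n) * #A := by
  have hA0 : (0 : ℝ) < #A := by exact_mod_cast hA.card_pos
  calc (#(m • A - n • A) : ℝ) ≤ ((#(A + A) : ℝ) / #A) ^ (m + n) * #A := by
        simpa using (NNRat.cast_le (K := ℝ)).2
          (pluennecke_ruzsa_inequality_nsmul_sub_nsmul_add hA A m n)
    _ ≤ K ^ (m + n) * #A := by
        gcongr
        rwa [div_le_iff₀ hA0]

end Pluennecke

section Bogolyubov

variable {G : Type*} [AddCommGroup G]

/-- The Fourier coefficient `∑ a ∈ A, γ a` of the indicator function of `A`, without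
normalisation. -/
def charSum (A : Finset G) (γ : AddChar G ℂ) : ℂ := ∑ a ∈ A, γ a

lemma norm_charSum_sq [Finite G] (A : Finset G) (γ : AddChar G ℂ) :
    (‖charSum A γ‖ ^ 2 : ℂ) = ∑ q ∈ A ×ˢ A, γ (q.1 - q.2) := by
  simp only [← Complex.mul_conj', charSum, map_sum, sum_mul_sum, sum_product, sub_eq_add_neg,
    AddChar.map_add_eq_mul, AddChar.map_neg_eq_conj]

lemma sum_norm_charSum_sq [Fintype G] (A : Finset G) :
    ∑ γ : AddChar G ℂ, ‖charSum A γ‖ ^ 2 = Fintype.card G * #A := by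
  classical
  have h : ∑ γ : AddChar G ℂ, (‖charSum A γ‖ ^ 2 : ℂ) = Fintype.card G * #A := by
    simp_rw [norm_charSum_sq, sum_comm (s := univ), AddChar.sum_apply_eq_ite, sub_eq_zero,
      sum_product, sum_ite_eq]
    simp [sum_ite_mem, mul_comm]
  exact_mod_cast h

lemma sum_norm_charSum_pow_four_mul_re [Finite G] [DecidableEq G] {A : Finset G} {x : G}
    (hx : x ∉ 2 • A - 2 • A) :
    ∑ γ : AddChar G ℂ, ‖charSum A γ‖ ^ 4 * (γ x).re = 0 := by
  cases nonempty_fintype G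
  have h : ∑ γ : AddChar G ℂ, (‖charSum A γ‖ ^ 4 : ℂ) * γ x = 0 := by
    have expand (γ : AddChar G ℂ) : (‖charSum A γ‖ ^ 4 : ℂ) * γ x =
        ∑ q ∈ A ×ˢ A, ∑ r ∈ A ×ˢ A, γ (q.1 - q.2 + (r.1 - r.2) + x) := by
      rw [show (‖charSum A γ‖ ^ 4 : ℂ) = ‖charSum A γ‖ ^ 2 * ‖charSum A γ‖ ^ 2 by ring,
        norm_charSum_sq, sum_mul_sum]
      simp only [sum_mul, AddChar.map_add_eq_mul]
    simp_rw [expand, sum_comm (s := univ), AddChar.sum_apply_eq_ite]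
    refine sum_eq_zero fun q hq => sum_eq_zero fun r hr => if_neg fun h0 => hx ?_
    rw [mem_product] at hq hr
    rw [two_nsmul, show x = q.2 + r.2 - (q.1 + r.1) by rw [← sub_eq_zero, ← h0]; abel]
    exact sub_mem_sub (add_mem_add hq.2 hr.2) (add_mem_add hq.1 hr.1)
  simpa [← Complex.ofReal_pow, Complex.re_ofReal_mul] using congrArg Complex.re h

lemma exists_finset_addChar_mem_two_nsmul_sub_two_nsmul [Fintype G] [DecidableEq G] {A : Finset G}
    (hA : A.Nonempty) :
    ∃ Λ : Finset (AddChar G ℂ), (#Λ : ℝ) * #A ^ 2 ≤ 2 * Fintype.card G ^ 2 ∧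
      ∀ x, (∀ γ ∈ Λ, 0 ≤ (γ x).re) → x ∈ 2 • A - 2 • A := by
  have hA0 : (0 : ℝ) < #A := by exact_mod_cast hA.card_pos
  set τ : ℝ := #A ^ 3 / (2 * Fintype.card G) with hτ
  have hτA : τ * (Fintype.card G * #A) = #A ^ 4 / 2 := by rw [hτ]; field_simp
  have : 0 < τ := by positivity
  refine ⟨univ.filter fun γ => τ ≤ ‖charSum A γ‖ ^ 2, ?_, fun x hx => ?_⟩
  · have hle : (#(univ.filter fun γ : AddChar G ℂ => τ ≤ ‖charSum A γ‖ ^ 2) : ℝ) * τ ≤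
        Fintype.card G * #A := by
      rw [← sum_norm_charSum_sq, ← nsmul_eq_mul]
      exact (card_nsmul_le_sum _ _ τ fun γ hγ => (mem_filter.1 hγ).2).trans
        (sum_le_sum_of_subset_of_nonneg (subset_univ _) fun _ _ _ => by positivity)
    rw [hτ, mul_div_assoc', div_le_iff₀ (by positivity)] at hle
    exact le_of_mul_le_mul_left (by linarith) hA0
  · by_contra hmem
    have total : ∑ γ : AddChar G ℂ, (‖charSum A γ‖ ^ 4 * (γ x).re + τ * ‖charSum A γ‖ ^ 2) =
        #A ^ 4 / 2 := by
      rw [sum_add_distrib, sum_norm_charSum_pow_four_mul_re hmem, ← mul_sum, sum_norm_charSum_sq,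
        zero_add, hτA]
    have nonneg (γ : AddChar G ℂ) :
        0 ≤ ‖charSum A γ‖ ^ 4 * (γ x).re + τ * ‖charSum A γ‖ ^ 2 := by
      rcases le_or_gt τ (‖charSum A γ‖ ^ 2) with h | h
      · have := hx γ (by simpa using h)
        positivity
      · have hre : -1 ≤ (γ x).re :=
          (abs_le.1 ((Complex.abs_re_le_norm _).trans_eq (AddChar.norm_apply γ x))).1
        nlinarith [sq_nonneg ‖charSum A γ‖, pow_nonneg (norm_nonneg (charSum A γ)) 4]
    have trivial_le := single_le_sum (fun γ _ => nonneg γ) (mem_univ (0 : AddChar G ℂ))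
    rw [total] at trivial_le
    simp only [charSum, AddChar.zero_apply, Complex.one_re, sum_const, nsmul_eq_mul, mul_one,
      Complex.norm_natCast] at trivial_le
    have : 0 < τ * (#A : ℝ) ^ 2 := by positivity
    have : 0 < (#A : ℝ) ^ 4 := by positivity
    linarith

end Bogolyubov

section Freiman

lemma exists_multiset_map_eq {α β : Type*} [Nonempty α] {A : Set α} {B : Set β} {φ : α → β}
    (h : Set.SurjOn φ A B) {s : Multiset β} (hs : ∀ b ∈ s, b ∈ B) :
    ∃ t : Multiset α, (∀ a ∈ t, a ∈ A) ∧ t.map φ = s := by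
  refine ⟨s.map (Function.invFunOn φ A), ?_, ?_⟩
  · simp only [Multiset.mem_map, forall_exists_index, and_imp, forall_apply_eq_imp_iff₂]
    exact fun b hb => h.mapsTo_invFunOn (hs b hb)
  · rw [Multiset.map_map]
    exact (Multiset.map_congr rfl fun b hb => h.rightInvOn_invFunOn (hs b hb)).trans s.map_id

lemma card_bind_of_forall_card {α β : Type*} {u : Multiset α} {s : α → Multiset β} {k : ℕ}
    (hs : ∀ x ∈ u, (s x).card = k) : (u.bind s).card = u.card * k := by
  have h : u.map (Multiset.card ∘ s) = u.map fun _ => k := Multiset.map_congr rfl hs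
  rw [Multiset.card_bind, h, Multiset.map_const', Multiset.sum_replicate, smul_eq_mul]

variable {G G' : Type*} [AddCommGroup G] [AddCommGroup G']

lemma mem_nsmul_iff_exists_multiset {A : Set G} {n : ℕ} {x : G} :
    x ∈ n • A ↔ ∃ s : Multiset G, (∀ a ∈ s, a ∈ A) ∧ s.card = n ∧ s.sum = x := by
  constructor
  · intro hx
    obtain ⟨f, hf, rfl⟩ := Set.mem_nsmul_iff_sum.1 hx
    exact ⟨univ.val.map f, by simpa using hf, by simp, rfl⟩
  · rintro ⟨s, hs, rfl, rfl⟩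
    simpa using Set.multiset_sum_mem_multiset_sum s (fun _ => A) id hs

lemma mem_nsmul_sub_nsmul_iff_exists_multiset {A : Set G} {k l : ℕ} {x : G} :
    x ∈ k • A - l • A ↔ ∃ s t : Multiset G, (∀ a ∈ s, a ∈ A) ∧ (∀ a ∈ t, a ∈ A) ∧
      s.card = k ∧ t.card = l ∧ s.sum - t.sum = x := by
  simp only [Set.mem_sub, mem_nsmul_iff_exists_multiset]
  constructor
  · rintro ⟨_, ⟨s, hs, hsk, rfl⟩, _, ⟨t, ht, htl, rfl⟩, rfl⟩
    exact ⟨s, t, hs, ht, hsk, htl, rfl⟩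
  · rintro ⟨s, t, hs, ht, hsk, htl, rfl⟩
    exact ⟨_, ⟨s, hs, hsk, rfl⟩, _, ⟨t, ht, htl, rfl⟩, rfl⟩

lemma sum_map_sub_sum_map_eq_iff {A : Set G} {B : Set G'} {φ : G → G'} {k l : ℕ}
    (hφ : IsAddFreimanIso (k + l) A B φ) {s t s' t' : Multiset G} (hs : ∀ a ∈ s, a ∈ A)
    (ht : ∀ a ∈ t, a ∈ A) (hs' : ∀ a ∈ s', a ∈ A) (ht' : ∀ a ∈ t', a ∈ A) (hsk : s.card = k)
    (htl : t.card = l) (hsk' : s'.card = k) (htl' : t'.card = l) :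
    (s.map φ).sum - (t.map φ).sum = (s'.map φ).sum - (t'.map φ).sum ↔
      s.sum - t.sum = s'.sum - t'.sum := by
  have h := hφ.map_sum_eq_map_sum (s := s + t') (t := s' + t)
    (fun a ha => (Multiset.mem_add.1 ha).elim (hs a) (ht' a))
    (fun a ha => (Multiset.mem_add.1 ha).elim (hs' a) (ht a))
    (by rw [Multiset.card_add, hsk, htl']) (by rw [Multiset.card_add, hsk', htl])
  simpa only [Multiset.map_add, Multiset.sum_add, sub_eq_sub_iff_add_eq_add] using h

-- Each `x` is represented as a difference of sums of `k` and `l` elements of `A`; which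
-- representation is chosen does not matter, as `φ` respects all relations of this length.
theorem exists_isAddFreimanIso_nsmul_sub_nsmul {A : Set G} {B : Set G'} {φ : G → G'} {n k l : ℕ}
    (hn : n ≠ 0) (hφ : IsAddFreimanIso (n * (k + l)) A B φ) :
    ∃ ψ : G → G', IsAddFreimanIso n (k • A - l • A) (k • B - l • B) ψ := by
  have hφ₁ : IsAddFreimanIso (k + l) A B φ := hφ.mono (hmn := Nat.le_mul_of_pos_left _ (by omega))
  have hrep := fun x => (mem_nsmul_sub_nsmul_iff_exists_multiset (A := A) (k := k) (l := l)
    (x := x)).1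
  choose! s t hs ht hk hl hsum using hrep
  refine ⟨fun x => ((s x).map φ).sum - ((t x).map φ).sum, ⟨fun x hx => ?_, fun x hx y hy h => ?_,
    fun y hy => ?_⟩, fun u v hu hv hun hvn => ?_⟩
  · have hmaps {s : Multiset G} (hs : ∀ a ∈ s, a ∈ A) : ∀ b ∈ s.map φ, b ∈ B := by
      simpa using fun a ha => hφ.bijOn.mapsTo (hs a ha)
    exact mem_nsmul_sub_nsmul_iff_exists_multiset.2 ⟨_, _, hmaps (hs x hx), hmaps (ht x hx),
      by rw [Multiset.card_map, hk x hx], by rw [Multiset.card_map, hl x hx], rfl⟩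
  · rw [← hsum x hx, ← hsum y hy]
    exact (sum_map_sub_sum_map_eq_iff hφ₁ (hs x hx) (ht x hx) (hs y hy) (ht y hy) (hk x hx)
      (hl x hx) (hk y hy) (hl y hy)).1 h
  · obtain ⟨_, _, hsB, htB, hk', hl', rfl⟩ := mem_nsmul_sub_nsmul_iff_exists_multiset.1 hy
    obtain ⟨s', hs', rfl⟩ := exists_multiset_map_eq hφ.bijOn.surjOn hsB
    obtain ⟨t', ht', rfl⟩ := exists_multiset_map_eq hφ.bijOn.surjOn htB
    rw [Multiset.card_map] at hk' hl'
    have hx := mem_nsmul_sub_nsmul_iff_exists_multiset.2 ⟨s', t', hs', ht', hk', hl', rfl⟩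
    exact ⟨_, hx, (sum_map_sub_sum_map_eq_iff hφ₁ (hs _ hx) (ht _ hx) hs' ht' (hk _ hx) (hl _ hx)
      hk' hl').2 (hsum _ hx)⟩
  · have hbind {r : G → Multiset G} {w : Multiset G} (hw : ∀ x ∈ w, x ∈ k • A - l • A)
        (hr : ∀ x ∈ k • A - l • A, ∀ a ∈ r x, a ∈ A) : ∀ a ∈ w.bind r, a ∈ A := by
      simp only [Multiset.mem_bind]
      exact fun a ⟨x, hx, ha⟩ => hr x (hw x hx) a ha
    have hsum_bind {w : Multiset G} (hw : ∀ x ∈ w, x ∈ k • A - l • A) :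
        (w.bind s).sum - (w.bind t).sum = w.sum := by
      rw [Multiset.sum_bind, Multiset.sum_bind, ← Multiset.sum_map_sub]
      exact congrArg _ ((Multiset.map_congr rfl fun x hx => hsum x (hw x hx)).trans w.map_id')
    rw [← hsum_bind hu, ← hsum_bind hv,
      ← sum_map_sub_sum_map_eq_iff (mul_add n k l ▸ hφ) (hbind hu hs) (hbind hu ht) (hbind hv hs)
        (hbind hv ht) (hun ▸ card_bind_of_forall_card fun x hx => hk x (hu hx))
        (hun ▸ card_bind_of_forall_card fun x hx => hl x (hu hx))
        (hvn ▸ card_bind_of_forall_card fun x hx => hk x (hv hx))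
        (hvn ▸ card_bind_of_forall_card fun x hx => hl x (hv hx))]
    simp only [Multiset.map_bind, Multiset.sum_bind, Multiset.sum_map_sub]

end Freiman

section Modelling

lemma exists_subset_forall_mem_Icc {α : Type*} {A : Finset α} {f : α → ℕ} {M n : ℕ} (hn : n ≠ 0)
    (hf : ∀ a ∈ A, f a ≤ M) :
    ∃ A' ⊆ A, #A ≤ n * #A' ∧ ∃ c, ∀ a ∈ A', f a ∈ Set.Icc c (c + M / n) := by
  classical
  set w := M / n
  have hblock : ∀ a ∈ A, f a / (w + 1) ∈ range n := fun a ha => by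
    have hM : M < (w + 1) * n := Nat.lt_mul_of_div_lt (Nat.lt_succ_self _) (Nat.pos_of_ne_zero hn)
    exact mem_range.2 (Nat.div_lt_of_lt_mul ((hf a ha).trans_lt hM))
  obtain ⟨j, -, hj⟩ := exists_le_card_fiber_of_nsmul_le_card_of_maps_to (b := (#A / n : ℚ)) hblock
    (nonempty_range_iff.2 hn) (by rw [card_range, nsmul_eq_mul, mul_div_cancel₀ _ (by simpa)])
  refine ⟨A.filter fun a => f a / (w + 1) = j, filter_subset _ _, ?_, j * (w + 1), fun a ha => ?_⟩
  · rw [div_le_iff₀' (by positivity)] at hj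
    exact_mod_cast hj
  · obtain ⟨-, rfl⟩ := mem_filter.1 ha
    have := Nat.div_add_mod' (f a) (w + 1)
    have := Nat.mod_lt (f a) (Nat.add_one_pos w)
    constructor <;> omega

lemma abs_sum_sub_sum_le {s t : Multiset ℤ} {n : ℕ} {c w : ℤ} (hs : ∀ a ∈ s, a ∈ Set.Icc c (c + w))
    (ht : ∀ a ∈ t, a ∈ Set.Icc c (c + w)) (hsn : s.card = n) (htn : t.card = n) :
    |s.sum - t.sum| ≤ n * w := by
  have hs₁ := Multiset.card_nsmul_le_sum fun a ha => (hs a ha).1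
  have hs₂ := Multiset.sum_le_card_nsmul s _ fun a ha => (hs a ha).2
  have ht₁ := Multiset.card_nsmul_le_sum fun a ha => (ht a ha).1
  have ht₂ := Multiset.sum_le_card_nsmul t _ fun a ha => (ht a ha).2
  rw [hsn, nsmul_eq_mul] at hs₁ hs₂
  rw [htn, nsmul_eq_mul] at ht₁ ht₂
  rw [abs_le]
  constructor <;> linarith

lemma isAddFreimanIso_image {G G' : Type*} [AddCommGroup G] [AddCommGroup G'] {A : Set G}
    {φ : G → G'} {n : ℕ} (hn : n ≠ 0)
    (h : ∀ s t : Multiset G, (∀ a ∈ s, a ∈ A) → (∀ a ∈ t, a ∈ A) → s.card = n → t.card = n →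
      ((s.map φ).sum = (t.map φ).sum ↔ s.sum = t.sum)) :
    IsAddFreimanIso n A (φ '' A) φ := by
  refine ⟨Set.InjOn.bijOn_image fun a ha b hb hab => ?_, fun s t hs ht => h s t hs ht⟩
  have key := h (a ::ₘ .replicate (n - 1) b) (b ::ₘ .replicate (n - 1) b)
    (by simp +contextual [ha, hb, Multiset.mem_replicate])
    (by simp +contextual [hb, Multiset.mem_replicate])
    (by simp; omega) (by simp; omega)
  simpa [hab] using key

variable {p : ℕ} [Fact p.Prime]

lemma card_filter_dvd_val_mul_le (N : ℕ) {y : ZMod p} (hy : y ≠ 0) :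
    #{l : ZMod p | l ≠ 0 ∧ N ∣ (l * y).val} ≤ (p - 1) / N := by
  rw [← Nat.Ioc_filter_dvd_card_eq_div]
  refine card_le_card_of_injOn (fun l => (l * y).val) (fun l hl => ?_) fun l _ l' _ h =>
    mul_right_cancel₀ hy (ZMod.val_injective p h)
  obtain ⟨hl0, hdvd⟩ := (mem_filter.1 hl).2
  have hne : (l * y).val ≠ 0 := by rw [Ne, ZMod.val_eq_zero]; exact mul_ne_zero hl0 hy
  have hlt := ZMod.val_lt (l * y)
  exact mem_coe.2 (mem_filter.2
    ⟨mem_Ioc.2 ⟨Nat.pos_of_ne_zero hne, Nat.le_sub_one_of_lt hlt⟩, hdvd⟩)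

lemma exists_forall_not_dvd_val_mul {D : Finset (ZMod p)} {N : ℕ} (h0 : 0 ∉ D)
    (hD : #D < N) : ∃ l : ZMod p, ∀ y ∈ D, ¬ N ∣ (l * y).val := by
  let bad (y : ZMod p) : Finset (ZMod p) := {l : ZMod p | l ≠ 0 ∧ N ∣ (l * y).val}
  have hbad : #(D.biUnion bad) < #(univ.erase (0 : ZMod p)) := by
    rw [card_erase_of_mem (mem_univ _), card_univ, ZMod.card]
    have hle : #(D.biUnion bad) ≤ #D * ((p - 1) / N) := card_biUnion_le_card_mul _ _ _ fun y hy =>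
      card_filter_dvd_val_mul_le N (ne_of_mem_of_not_mem hy h0)
    have hp := (Fact.out : p.Prime).two_le
    have hdiv : N * ((p - 1) / N) ≤ p - 1 := Nat.mul_div_le _ _
    rcases Nat.eq_zero_or_pos ((p - 1) / N) with h | h
    · rw [h] at hle
      omega
    · exact hle.trans_lt ((Nat.mul_lt_mul_of_pos_right hD h).trans_le hdiv)
  obtain ⟨l, hl, hlD⟩ := exists_mem_notMem_of_card_lt_card hbad
  refine ⟨l, fun y hy hdvd => hlD (mem_biUnion.2 ⟨y, hy, ?_⟩)⟩
  exact mem_filter.2 ⟨mem_univ _, ne_of_mem_erase hl, hdvd⟩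

lemma natAbs_eq_val_or_natAbs_eq_val_neg {I : ℤ} (hI : |I| < p) :
    I.natAbs = (I : ZMod p).val ∨ I.natAbs = (-I : ZMod p).val := by
  have hlt : I.natAbs < p := by rwa [Int.abs_eq_natAbs, Nat.cast_lt] at hI
  rcases I.natAbs_eq with h | h
  · left
    conv_rhs => rw [h, Int.cast_natCast, ZMod.val_cast_of_lt hlt]
  · right
    conv_rhs => rw [h, Int.cast_neg, neg_neg, Int.cast_natCast, ZMod.val_cast_of_lt hlt]

lemma intCast_zmod_eq_zero_iff_of_abs_lt {N : ℕ} {l y : ZMod p} {I : ℤ} (hI : |I| < p)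
    (hIy : (I : ZMod p) = l * y) (hpos : y ≠ 0 → ¬ N ∣ (l * y).val)
    (hneg : y ≠ 0 → ¬ N ∣ (l * -y).val) : (I : ZMod N) = 0 ↔ y = 0 := by
  rw [ZMod.intCast_zmod_eq_zero_iff_dvd, Int.natCast_dvd]
  constructor
  · intro hdvd
    by_contra hy
    rcases natAbs_eq_val_or_natAbs_eq_val_neg hI with h | h
    · exact hpos hy (by rwa [← hIy, ← h])
    · exact hneg hy (by rwa [mul_neg, ← hIy, ← h])
  · rintro rfl
    rw [mul_zero, ZMod.intCast_zmod_eq_zero_iff_dvd] at hIy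
    simp [Int.eq_zero_of_abs_lt_dvd hIy hI]

-- The Ruzsa modelling map: after a dilation by `l`, reduce integer representatives modulo `N`.
theorem exists_isAddFreimanIso_zmod {A : Finset (ZMod p)} (hA : A.Nonempty) {n N : ℕ} (hn : n ≠ 0)
    (hN : #(n • A - n • A) ≤ N) :
    ∃ A' ⊆ A, #A ≤ n * #A' ∧ ∃ φ : ZMod p → ZMod N, IsAddFreimanIso n A' (φ '' A') φ := by
  have h0 : (0 : ZMod p) ∈ n • A - n • A :=
    zero_mem_sub_iff.2 ((disjoint_self_iff_empty _).not.2 hA.nsmul.ne_empty)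
  obtain ⟨l, hl⟩ := exists_forall_not_dvd_val_mul (notMem_erase (0 : ZMod p) (n • A - n • A))
    ((card_erase_lt_of_mem h0).trans_le hN)
  obtain ⟨A', hA', hcard, c, hc⟩ := exists_subset_forall_mem_Icc (f := fun a => (l * a).val)
    (M := p - 1) hn fun a (_ : a ∈ A) => Nat.le_sub_one_of_lt (ZMod.val_lt _)
  refine ⟨A', hA', hcard, fun a => ((l * a).val : ZMod N), isAddFreimanIso_image hn
    fun s t hs ht hsn htn => ?_⟩
  let v (a : ZMod p) : ℤ := (l * a).val
  have hv {u : Multiset (ZMod p)} (hu : ∀ a ∈ u, a ∈ (A' : Set (ZMod p))) :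
      ∀ i ∈ u.map v, i ∈ Set.Icc (c : ℤ) (c + ((p - 1) / n : ℕ)) := by
    simp only [Multiset.mem_map, forall_exists_index, and_imp, forall_apply_eq_imp_iff₂, v,
      Set.mem_Icc, ← Nat.cast_add, Nat.cast_le]
    exact fun a ha => hc a (hu a ha)
  have hlt : |(s.map v).sum - (t.map v).sum| < p := by
    have hle := abs_sum_sub_sum_le (n := n) (hv hs) (hv ht) (by rwa [Multiset.card_map])
      (by rwa [Multiset.card_map])
    have hdiv : (n : ℤ) * ((p - 1) / n : ℕ) ≤ (p - 1 : ℕ) := by exact_mod_cast Nat.mul_div_le _ _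
    have := (Fact.out : p.Prime).pos
    omega
  have hsum {u : Multiset (ZMod p)} (hu : ∀ a ∈ u, a ∈ (A' : Set (ZMod p))) (hun : u.card = n) :
      u.sum ∈ n • A := by
    rw [← mem_coe, coe_nsmul]
    exact mem_nsmul_iff_exists_multiset.2 ⟨u, fun a ha => hA' (hu a ha), hun, rfl⟩
  have hmul (u : Multiset (ZMod p)) : (u.map (l * ·)).sum = l * u.sum :=
    ((AddMonoidHom.mulLeft l).map_multiset_sum u).symm
  have key := intCast_zmod_eq_zero_iff_of_abs_lt (N := N) (l := l) (y := s.sum - t.sum) hlt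
    (by simp [v, Int.cast_multiset_sum, hmul, mul_sub])
    (fun h => hl _ (mem_erase.2 ⟨h, sub_mem_sub (hsum hs hsn) (hsum ht htn)⟩))
    (fun h => hl _ (mem_erase.2
      ⟨neg_ne_zero.2 h, neg_sub s.sum _ ▸ sub_mem_sub (hsum ht htn) (hsum hs hsn)⟩))
  simpa [v, Int.cast_multiset_sum, sub_eq_zero] using key

end Modelling

section Lattice

open Metric Module

section Normed

variable {V : Type*} [NormedAddCommGroup V]

lemma exists_forall_norm_le_of_finite_inter_closedBall {Γ : AddSubgroup V}
    (hΓ : ∀ r, ((Γ : Set V) ∩ closedBall 0 r).Finite) (hne : Γ ≠ ⊥) :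
    ∃ v ∈ Γ, v ≠ 0 ∧ ∀ x ∈ Γ, x ≠ 0 → ‖v‖ ≤ ‖x‖ := by
  obtain ⟨x, hx, hx0⟩ := Γ.bot_or_exists_ne_zero.resolve_left hne
  have hfin : {y ∈ (Γ : Set V) ∩ closedBall 0 ‖x‖ | y ≠ 0}.Finite :=
    (hΓ _).subset (Set.sep_subset _ _)
  obtain ⟨v, ⟨⟨hv, hvx⟩, hv0⟩, hmin⟩ :=
    Set.exists_min_image _ norm hfin ⟨x, ⟨hx, by simp⟩, hx0⟩
  rw [mem_closedBall_zero_iff] at hvx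
  refine ⟨v, hv, hv0, fun y hy hy0 => ?_⟩
  by_cases hyx : ‖y‖ ≤ ‖x‖
  · exact hmin y ⟨⟨hy, mem_closedBall_zero_iff.2 hyx⟩, hy0⟩
  · exact hvx.trans (not_le.1 hyx).le

variable [NormedSpace ℝ V]

lemma card_le_five_pow_finrank [FiniteDimensional ℝ V] {S : Finset V} {r : ℝ} (hr : 0 < r)
    (hS : ∀ x ∈ S, ‖x‖ ≤ 2 * r) (hsep : (S : Set V).Pairwise fun x y => r ≤ ‖x - y‖) :
    #S ≤ 5 ^ finrank ℝ V := by
  classical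
  rw [← card_image_of_injective S (smul_right_injective V (inv_ne_zero hr.ne'))]
  refine Besicovitch.card_le_of_separated _ ?_ ?_ <;> simp only [forall_mem_image]
  · intro x hx
    rw [norm_smul, norm_inv, Real.norm_of_nonneg hr.le, inv_mul_le_iff₀ hr, mul_comm]
    exact hS x hx
  · intro x hx y hy hxy
    rw [← smul_sub, norm_smul, norm_inv, Real.norm_of_nonneg hr.le, le_inv_mul_iff₀ hr, mul_one]
    exact hsep hx hy (ne_of_apply_ne _ hxy)

variable {Γ : AddSubgroup V}

lemma ncard_inter_closedBall_two_mul_le [FiniteDimensional ℝ V]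
    (hΓ : ∀ r, ((Γ : Set V) ∩ closedBall 0 r).Finite) {r : ℝ} (hr : 0 < r) :
    ((Γ : Set V) ∩ closedBall 0 (2 * r)).ncard ≤
      5 ^ finrank ℝ V * ((Γ : Set V) ∩ closedBall 0 r).ncard := by
  classical
  lift r to NNReal using hr.le
  set F := (Γ : Set V) ∩ closedBall 0 (2 * r)
  have hpack : packingNumber r F ≠ ⊤ :=
    ((packingNumber_le_encard_self F).trans_lt (hΓ _).encard_lt_top).ne
  have hSF : maximalSeparatedSet r F ⊆ F := maximalSeparatedSet_subset
  obtain ⟨S, hS⟩ := ((hΓ _).subset hSF).exists_finset_coe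
  have hcover := isCover_iff_subset_iUnion_closedBall.1 (isCover_maximalSeparatedSet hpack)
  have hsep : IsSeparated r (maximalSeparatedSet r F) := isSeparated_maximalSeparatedSet
  rw [← hS] at hSF hcover hsep
  have hcard : #S ≤ 5 ^ finrank ℝ V := by
    refine card_le_five_pow_finrank hr (fun x hx => by simpa using (hSF hx).2) ?_
    intro x hx y hy hxy
    have h : (r : ENNReal) < edist x y := hsep hx hy hxy
    rw [edist_nndist, ENNReal.coe_lt_coe] at h
    rw [← dist_eq_norm]
    exact h.le
  have hsub : F ⊆ S + (Γ : Set V) ∩ closedBall 0 r := by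
    intro x hx
    obtain ⟨s, hs, hxs⟩ := Set.mem_iUnion₂.1 (hcover hx)
    exact ⟨s, hs, x - s, ⟨Γ.sub_mem hx.1 (hSF hs).1, by simpa [dist_eq_norm] using hxs⟩,
      add_sub_cancel _ _⟩
  calc F.ncard ≤ (S + (Γ : Set V) ∩ closedBall 0 r).ncard :=
        Set.ncard_le_ncard hsub (S.finite_toSet.add (hΓ _))
    _ ≤ (S : Set V).ncard * ((Γ : Set V) ∩ closedBall 0 r).ncard := Set.natCard_add_le
    _ ≤ _ := by rw [Set.ncard_coe_finset]; gcongr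

lemma ncard_inter_closedBall_two_pow_mul_le [FiniteDimensional ℝ V]
    (hΓ : ∀ r, ((Γ : Set V) ∩ closedBall 0 r).Finite) {r : ℝ} (hr : 0 < r) (j : ℕ) :
    ((Γ : Set V) ∩ closedBall 0 (2 ^ j * r)).ncard ≤
      (5 ^ finrank ℝ V) ^ j * ((Γ : Set V) ∩ closedBall 0 r).ncard := by
  induction j with
  | zero => simp
  | succ j ih =>
    rw [pow_succ', mul_assoc, pow_succ', mul_assoc]
    exact (ncard_inter_closedBall_two_mul_le hΓ (by positivity)).trans (Nat.mul_le_mul_left _ ih)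

lemma exists_zsmul_eq_of_mem_span_singleton {v : V} (hv : v ∈ Γ)
    (hmin : ∀ x ∈ Γ, x ≠ 0 → ‖v‖ ≤ ‖x‖) {x : V} (hx : x ∈ Γ) (hxv : x ∈ Submodule.span ℝ {v}) :
    ∃ t : ℤ, t • v = x := by
  obtain ⟨t, rfl⟩ := Submodule.mem_span_singleton.1 hxv
  obtain rfl | hv0 := eq_or_ne v 0
  · exact ⟨0, by simp⟩
  have hfract : Int.fract t • v ∈ Γ := by
    rw [Int.fract, sub_smul, Int.cast_smul_eq_zsmul]
    exact Γ.sub_mem hx (Γ.zsmul_mem hv _)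
  have hlt : ‖Int.fract t • v‖ < ‖v‖ := by
    rw [norm_smul, Real.norm_of_nonneg (Int.fract_nonneg t)]
    exact mul_lt_of_lt_one_left (norm_pos_iff.2 hv0) (Int.fract_lt_one t)
  have hzero : Int.fract t • v = 0 := by_contra fun h => (hmin _ hfract h).not_gt hlt
  refine ⟨⌊t⌋, ?_⟩
  rw [← Int.cast_smul_eq_zsmul ℝ, ← sub_eq_zero, ← neg_eq_zero, neg_sub, ← sub_smul]
  exact hzero

end Normed

section InnerProduct

variable {V : Type*} [NormedAddCommGroup V] [InnerProductSpace ℝ V]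

/-- The orthogonal projection of `V` along the vector `v`. Applied with `v` a shortest vector of a
lattice, it reduces the dimension of the lattice by one. -/
noncomputable def projAlong (v : V) : V →L[ℝ] V := (Submodule.span ℝ {v})ᗮ.starProjection

lemma exists_projAlong_eq_sub_smul (v x : V) : ∃ t : ℝ, projAlong v x = x - t • v := by
  obtain ⟨t, ht⟩ := Submodule.mem_span_singleton.1
    ((Submodule.span ℝ {v}).starProjection_apply_mem x)
  exact ⟨t, by rw [projAlong, Submodule.starProjection_orthogonal_val, ht]⟩

lemma projAlong_eq_zero_iff {v x : V} : projAlong v x = 0 ↔ x ∈ Submodule.span ℝ {v} := by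
  rw [projAlong, Submodule.starProjection_apply_eq_zero_iff, Submodule.orthogonal_orthogonal]

lemma projAlong_self (v : V) : projAlong v v = 0 :=
  projAlong_eq_zero_iff.2 (Submodule.mem_span_singleton_self v)

lemma norm_projAlong_le (v x : V) : ‖projAlong v x‖ ≤ ‖x‖ :=
  Submodule.norm_starProjection_apply_le _ x

variable {Γ : AddSubgroup V} {v : V}

lemma exists_projAlong_eq_norm_le (hv : v ∈ Γ) {y : V}
    (hy : y ∈ Γ.map (projAlong v : V →+ V)) :
    ∃ x ∈ Γ, projAlong v x = y ∧ ‖x‖ ≤ ‖y‖ + ‖v‖ / 2 := by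
  obtain ⟨x, hx, rfl⟩ := hy
  obtain ⟨t, ht⟩ := exists_projAlong_eq_sub_smul v x
  refine ⟨x - round t • v, Γ.sub_mem hx (Γ.zsmul_mem hv _), ?_, ?_⟩
  · simp [projAlong_self]
  have hdecomp : x - round t • v = projAlong v x + (t - round t) • v := by
    rw [ht, sub_smul, Int.cast_smul_eq_zsmul]; abel
  rw [hdecomp]
  refine (norm_add_le _ _).trans (add_le_add_right ?_ _)
  rw [norm_smul, Real.norm_eq_abs, div_eq_inv_mul, ← one_div]
  exact mul_le_mul_of_nonneg_right (abs_sub_round t) (norm_nonneg v)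

lemma exists_projAlong_eq_norm_le_two_mul (hv : v ∈ Γ) (hmin : ∀ x ∈ Γ, x ≠ 0 → ‖v‖ ≤ ‖x‖) {y : V}
    (hy : y ∈ Γ.map (projAlong v : V →+ V)) :
    ∃ x ∈ Γ, projAlong v x = y ∧ ‖x‖ ≤ 2 * ‖y‖ := by
  obtain rfl | hy0 := eq_or_ne y 0
  · exact ⟨0, Γ.zero_mem, by simp, by simp⟩
  obtain ⟨x, hx, rfl, hnorm⟩ := exists_projAlong_eq_norm_le hv hy
  have hx0 : x ≠ 0 := by rintro rfl; exact hy0 (map_zero _)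
  exact ⟨x, hx, rfl, by linarith [hmin x hx hx0]⟩

lemma finite_map_projAlong_inter_closedBall (hΓ : ∀ r, ((Γ : Set V) ∩ closedBall 0 r).Finite)
    (hv : v ∈ Γ) (r : ℝ) :
    ((Γ.map (projAlong v : V →+ V) : Set V) ∩ closedBall 0 r).Finite := by
  refine ((hΓ (r + ‖v‖ / 2)).image (projAlong v)).subset ?_
  rintro y ⟨hy, hyr⟩
  obtain ⟨x, hx, hxy, hnorm⟩ := exists_projAlong_eq_norm_le hv hy
  rw [mem_closedBall_zero_iff] at hyr
  exact ⟨x, ⟨hx, mem_closedBall_zero_iff.2 (hnorm.trans (by gcongr))⟩, hxy⟩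

lemma finrank_span_map_projAlong_lt [FiniteDimensional ℝ V] (hv : v ∈ Γ) (hv0 : v ≠ 0) :
    finrank ℝ (Submodule.span ℝ (Γ.map (projAlong v : V →+ V) : Set V)) <
      finrank ℝ (Submodule.span ℝ (Γ : Set V)) := by
  have hvspan : v ∈ Submodule.span ℝ (Γ : Set V) := Submodule.subset_span hv
  refine Submodule.finrank_lt_finrank_of_lt (lt_of_le_of_ne (Submodule.span_le.2 ?_) ?_)
  · rintro _ ⟨x, hx, rfl⟩
    obtain ⟨t, ht⟩ := exists_projAlong_eq_sub_smul v x
    change projAlong v x ∈ _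
    rw [ht]
    exact Submodule.sub_mem _ (Submodule.subset_span hx) (Submodule.smul_mem _ _ hvspan)
  · intro heq
    have horth : Submodule.span ℝ (Γ.map (projAlong v : V →+ V) : Set V) ≤
        (Submodule.span ℝ {v})ᗮ := by
      refine Submodule.span_le.2 ?_
      rintro _ ⟨x, -, rfl⟩
      exact Submodule.starProjection_apply_mem _ x
    refine hv0 (inner_self_eq_zero (𝕜 := ℝ).1 ?_)
    exact horth (heq ▸ hvspan) v (Submodule.mem_span_singleton_self v)

lemma ncard_fiber_projAlong_le (hv : v ∈ Γ) (hv0 : v ≠ 0)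
    (hmin : ∀ x ∈ Γ, x ≠ 0 → ‖v‖ ≤ ‖x‖) (r : ℝ) (y : V) :
    ((Γ : Set V) ∩ closedBall 0 r ∩ projAlong v ⁻¹' {y}).ncard ≤ 2 * ⌊2 * r / ‖v‖⌋₊ + 1 := by
  classical
  set M := ⌊2 * r / ‖v‖⌋₊
  obtain hempty | ⟨x₀, ⟨hx₀, hx₀r⟩, rfl⟩ :=
    ((Γ : Set V) ∩ closedBall 0 r ∩ projAlong v ⁻¹' {y}).eq_empty_or_nonempty
  · simp [hempty]
  have hsub : (Γ : Set V) ∩ closedBall 0 r ∩ projAlong v ⁻¹' {projAlong v x₀} ⊆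
      ((Finset.Icc (-M : ℤ) M).image fun t => x₀ + t • v : Finset V) := by
    rintro x ⟨⟨hx, hxr⟩, hxy⟩
    obtain ⟨t, ht⟩ := exists_zsmul_eq_of_mem_span_singleton hv hmin (Γ.sub_mem hx hx₀)
      (projAlong_eq_zero_iff.1 (by rw [map_sub, hxy, sub_self]))
    refine mem_coe.2 (mem_image.2 ⟨t, ?_, by rw [ht, add_sub_cancel]⟩)
    rw [mem_closedBall_zero_iff] at hxr hx₀r
    have hnorm : (t.natAbs : ℝ) * ‖v‖ ≤ 2 * r := by
      rw [Nat.cast_natAbs, Int.cast_abs, ← Real.norm_eq_abs, ← norm_smul, Int.cast_smul_eq_zsmul,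
        ht]
      linarith [norm_sub_le x x₀]
    have htM : t.natAbs ≤ M := Nat.le_floor ((le_div_iff₀ (norm_pos_iff.2 hv0)).2 hnorm)
    rw [Finset.mem_Icc]
    omega
  refine (Set.ncard_le_ncard hsub).trans ?_
  rw [Set.ncard_coe_finset]
  refine card_image_le.trans ?_
  rw [Int.card_Icc]
  omega

lemma ncard_inter_closedBall_le_mul_ncard_map_projAlong
    (hΓ : ∀ r, ((Γ : Set V) ∩ closedBall 0 r).Finite) (hv : v ∈ Γ) (hv0 : v ≠ 0)
    (hmin : ∀ x ∈ Γ, x ≠ 0 → ‖v‖ ≤ ‖x‖) (r : ℝ) :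
    ((Γ : Set V) ∩ closedBall 0 r).ncard ≤ (2 * ⌊2 * r / ‖v‖⌋₊ + 1) *
      ((Γ.map (projAlong v : V →+ V) : Set V) ∩ closedBall 0 r).ncard := by
  classical
  have hΓ' := finite_map_projAlong_inter_closedBall hΓ hv r
  rw [Set.ncard_eq_toFinset_card _ (hΓ r), Set.ncard_eq_toFinset_card _ hΓ']
  refine card_le_mul_card_image_of_maps_to (f := projAlong v) ?_ _ fun y _ => ?_
  · intro x hx
    simp only [Set.Finite.mem_toFinset, Set.mem_inter_iff, mem_closedBall_zero_iff] at hx ⊢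
    exact ⟨⟨x, hx.1, rfl⟩, (norm_projAlong_le v x).trans hx.2⟩
  · refine (ncard_fiber_projAlong_le hv hv0 hmin r y).trans' (le_of_eq ?_)
    rw [← Set.ncard_coe_finset]
    congr 1
    ext x
    simp

lemma linearIndependent_finCons_of_projAlong (hv0 : v ≠ 0) {d : ℕ} {w : Fin d → V}
    (hw : LinearIndependent ℝ (projAlong v ∘ w)) :
    LinearIndependent ℝ (Fin.cons v w : Fin (d + 1) → V) := by
  refine (hw.of_comp (projAlong v).toLinearMap).finCons fun hvw => hv0 ?_
  obtain ⟨c, hc⟩ := (Submodule.mem_span_range_iff_exists_fun ℝ).1 hvw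
  have hproj : ∑ j, c j • (projAlong v ∘ w) j = 0 := by
    simpa [projAlong_self] using congrArg (projAlong v) hc
  simpa [Fintype.linearIndependent_iff.1 hw c hproj] using hc.symm

lemma two_mul_floor_four_mul_add_one_le (a : ℝ) : 2 * ⌊4 * a⌋₊ + 1 ≤ 8 * (⌊a⌋₊ + 1) := by
  have hlt : ⌊4 * a⌋₊ < 4 * (⌊a⌋₊ + 1) := by
    refine Nat.floor_lt' (by omega) |>.2 ?_
    push_cast
    linarith [Nat.lt_floor_add_one a]
  omega

lemma ncard_inter_closedBall_le_mul_ncard_map_projAlong_div_four [FiniteDimensional ℝ V]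
    (hΓ : ∀ r, ((Γ : Set V) ∩ closedBall 0 r).Finite) (hv : v ∈ Γ) (hv0 : v ≠ 0)
    (hmin : ∀ x ∈ Γ, x ≠ 0 → ‖v‖ ≤ ‖x‖) {r : ℝ} (hr : 0 < r) :
    ((Γ : Set V) ∩ closedBall 0 r).ncard ≤
      8 * 25 ^ finrank ℝ V * (⌊r / (2 * ‖v‖)⌋₊ + 1) *
        ((Γ.map (projAlong v : V →+ V) : Set V) ∩ closedBall 0 (r / 4)).ncard := by
  have hfloor : 2 * ⌊2 * r / ‖v‖⌋₊ + 1 ≤ 8 * (⌊r / (2 * ‖v‖)⌋₊ + 1) := by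
    convert two_mul_floor_four_mul_add_one_le (r / (2 * ‖v‖)) using 4
    field_simp
    norm_num
  have hdouble := ncard_inter_closedBall_two_pow_mul_le
    (finite_map_projAlong_inter_closedBall hΓ hv) (r := r / 4) (by positivity) 2
  rw [show (2 : ℝ) ^ 2 * (r / 4) = r by ring, pow_right_comm] at hdouble
  calc _ ≤ _ := ncard_inter_closedBall_le_mul_ncard_map_projAlong hΓ hv hv0 hmin r
    _ ≤ _ := Nat.mul_le_mul hfloor hdouble
    _ = _ := by ring

-- A shortest vector `v` takes up half of the radius `r`. Lifting the vectors found in the projected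
-- lattice at most doubles their norms, so radius `r / 4` there costs the other half.
lemma exists_linearIndependent_ncard_le [FiniteDimensional ℝ V] (Γ : AddSubgroup V)
    (hΓ : ∀ r, ((Γ : Set V) ∩ closedBall 0 r).Finite) {r : ℝ} (hr : 0 < r) :
    ∃ (d : ℕ) (w : Fin d → V) (H : Fin d → ℕ), LinearIndependent ℝ w ∧ (∀ j, w j ∈ Γ) ∧
      ∑ j, (H j : ℝ) * ‖w j‖ ≤ r ∧
      ((Γ : Set V) ∩ closedBall 0 r).ncard ≤
        (8 * 25 ^ finrank ℝ V) ^ finrank ℝ (Submodule.span ℝ (Γ : Set V)) * ∏ j, (H j + 1) := by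
  induction hk : finrank ℝ (Submodule.span ℝ (Γ : Set V)) using Nat.strong_induction_on
    generalizing Γ r with | _ k ih
  obtain rfl | hne := eq_or_ne Γ ⊥
  · have hcard : (((⊥ : AddSubgroup V) : Set V) ∩ closedBall 0 r).ncard ≤ 1 := by
      rw [AddSubgroup.coe_bot, ← Set.ncard_singleton (0 : V)]
      exact Set.ncard_le_ncard Set.inter_subset_left
    refine ⟨0, Fin.elim0, Fin.elim0, linearIndependent_empty_type, fun j => j.elim0,
      by simpa using hr.le, hcard.trans ?_⟩
    simp [Nat.one_le_iff_ne_zero]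
  obtain ⟨v, hv, hv0, hmin⟩ := exists_forall_norm_le_of_finite_inter_closedBall hΓ hne
  have hrank := hk ▸ finrank_span_map_projAlong_lt hv hv0
  obtain ⟨d, w', H, hindep, hw', hsum, hcard⟩ := ih _ hrank _
    (finite_map_projAlong_inter_closedBall hΓ hv) (r := r / 4) (by positivity) rfl
  choose w hw hproj hnorm using fun j => exists_projAlong_eq_norm_le_two_mul hv hmin (hw' j)
  obtain rfl : projAlong v ∘ w = w' := funext hproj
  simp only [Function.comp_apply] at hsum hnorm
  refine ⟨d + 1, Fin.cons v w, Fin.cons ⌊r / (2 * ‖v‖)⌋₊ H,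
    linearIndependent_finCons_of_projAlong hv0 hindep, Fin.cases hv hw, ?_, ?_⟩
  · have hhead : (⌊r / (2 * ‖v‖)⌋₊ : ℝ) * ‖v‖ ≤ r / 2 := by
      have := Nat.floor_le (a := r / (2 * ‖v‖)) (by positivity)
      rw [le_div_iff₀ (by positivity)] at this
      linarith
    have htail : ∑ j, (H j : ℝ) * ‖w j‖ ≤ 2 * ∑ j, (H j : ℝ) * ‖projAlong v (w j)‖ := by
      rw [mul_sum]
      exact sum_le_sum fun j _ => by nlinarith [hnorm j, (H j).cast_nonneg (α := ℝ)]
    simp only [Fin.sum_univ_succ, Fin.cons_zero, Fin.cons_succ]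
    linarith
  · simp only [Fin.prod_univ_succ, Fin.cons_zero, Fin.cons_succ]
    calc _ ≤ _ := ncard_inter_closedBall_le_mul_ncard_map_projAlong_div_four hΓ hv hv0 hmin hr
      _ ≤ _ := Nat.mul_le_mul_left _ hcard
      _ = (8 * 25 ^ finrank ℝ V) ^ (_ + 1) * ((⌊r / (2 * ‖v‖)⌋₊ + 1) * ∏ j, (H j + 1)) := by ring
      _ ≤ _ := Nat.mul_le_mul_right _ (Nat.pow_le_pow_right (by positivity) hrank)

end InnerProduct

end Lattice

section Progression

variable {G G' ι κ : Type*} [AddCommGroup G] [AddCommGroup G'] [DecidableEq G]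
  [Fintype ι] [DecidableEq ι] [Fintype κ] [DecidableEq κ]

/-- The generalized arithmetic progression with base point `a`, steps `x` and lengths `H`, of
dimension `#ι`. The coefficients run over the box `Iic H`, so `H j` is the largest coefficient of
`x j` and not the number of its values. -/
def gap (a : G) (x : ι → G) (H : ι → ℕ) : Finset G :=
  (Iic H).image fun m => a + Fintype.linearCombination ℕ x m

lemma mem_gap {a : G} {x : ι → G} {H : ι → ℕ} {g : G} :
    g ∈ gap a x H ↔ ∃ m ≤ H, a + Fintype.linearCombination ℕ x m = g := by
  simp [gap]

lemma gap_reindex (e : ι ≃ κ) (a : G) (x : κ → G) (H : κ → ℕ) :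
    gap a (x ∘ e) (H ∘ e) = gap a x H := by
  have h (m : κ → ℕ) : Fintype.linearCombination ℕ (x ∘ e) (m ∘ e) =
      Fintype.linearCombination ℕ x m := by
    simpa only [Fintype.linearCombination_apply, Function.comp_apply] using
      e.sum_comp fun k => m k • x k
  ext g
  simp only [mem_gap]
  constructor
  · rintro ⟨m, hm, rfl⟩
    refine ⟨m ∘ e.symm, fun k => ?_, ?_⟩
    · simpa using hm (e.symm k)
    · rw [← h, Function.comp_assoc, e.symm_comp_self, Function.comp_id]
  · rintro ⟨m, hm, rfl⟩
    exact ⟨m ∘ e, fun j => hm (e j), by rw [h]⟩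

lemma gap_eq_image_piFinset (a : G) (x : ι → G) (H : ι → ℕ) :
    gap a x H = (Fintype.piFinset fun j => range (H j + 1)).image fun m => a + ∑ j, m j • x j := by
  ext g
  simp only [mem_gap, mem_image, Fintype.mem_piFinset, mem_range, Nat.lt_succ_iff, Pi.le_def,
    Fintype.linearCombination_apply]

lemma card_gap_le (a : G) (x : ι → G) (H : ι → ℕ) : #(gap a x H) ≤ ∏ j, (H j + 1) :=
  card_image_le.trans_eq (by simp [Pi.card_Iic])

lemma card_gap {a : G} {x : ι → G} {H : ι → ℕ}
    (h : Set.InjOn (Fintype.linearCombination ℕ x) (Set.Iic H)) :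
    #(gap a x H) = ∏ j, (H j + 1) := by
  rw [gap, card_image_of_injOn, Pi.card_Iic]
  · simp
  · exact fun m hm m' hm' he => h (by simpa using hm) (by simpa using hm') (add_left_cancel he)

lemma gap_sub_gap (a b : G) (x : ι → G) (H H' : ι → ℕ) :
    gap a x H - gap b x H' = gap (a - b - Fintype.linearCombination ℕ x H') x (H + H') := by
  ext g
  simp only [mem_sub, mem_gap]
  constructor
  · rintro ⟨_, ⟨m, hm, rfl⟩, _, ⟨m', hm', rfl⟩, rfl⟩
    refine ⟨m + (H' - m'), add_le_add hm tsub_le_self, ?_⟩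
    have : Fintype.linearCombination ℕ x H' = Fintype.linearCombination ℕ x (H' - m') +
      Fintype.linearCombination ℕ x m' := by rw [← map_add, tsub_add_cancel_of_le hm']
    rw [this, map_add]
    abel
  · rintro ⟨m, hm, rfl⟩
    have hle : m - m ⊓ H ≤ H' := fun j => by
      have := hm j
      simp only [Pi.add_apply, Pi.sub_apply, Pi.inf_apply] at *
      omega
    refine ⟨_, ⟨m ⊓ H, inf_le_right, rfl⟩, _, ⟨H' - (m - m ⊓ H), tsub_le_self, rfl⟩, ?_⟩
    have h₁ : Fintype.linearCombination ℕ x H' = Fintype.linearCombination ℕ x (H' - (m - m ⊓ H)) +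
      Fintype.linearCombination ℕ x (m - m ⊓ H) := by rw [← map_add, tsub_add_cancel_of_le hle]
    have h₂ : Fintype.linearCombination ℕ x m = Fintype.linearCombination ℕ x (m - m ⊓ H) +
      Fintype.linearCombination ℕ x (m ⊓ H) := by
        rw [← map_add, tsub_add_cancel_of_le inf_le_left]
    rw [h₁, h₂]
    abel

lemma gap_add_gap (a b : G) (x : ι → G) (y : κ → G) (H : ι → ℕ) (H' : κ → ℕ) :
    gap a x H + gap b y H' = gap (a + b) (Sum.elim x y) (Sum.elim H H') := by
  ext g
  simp only [mem_add, mem_gap, Fintype.linearCombination_apply, Fintype.sum_sum_type, Sum.elim_inl,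
    Sum.elim_inr]
  constructor
  · rintro ⟨_, ⟨m, hm, rfl⟩, _, ⟨m', hm', rfl⟩, rfl⟩
    refine ⟨Sum.elim m m', Sum.elim_le_elim_iff.2 ⟨hm, hm'⟩, ?_⟩
    simp only [Sum.elim_inl, Sum.elim_inr]
    abel
  · rintro ⟨m, hm, rfl⟩
    refine ⟨_, ⟨m ∘ Sum.inl, fun j => hm (.inl j), rfl⟩, _,
      ⟨m ∘ Sum.inr, fun j => hm (.inr j), rfl⟩, ?_⟩
    simp only [Function.comp_apply]
    abel

lemma subset_gap_coe (F : Finset G) : F ⊆ gap 0 ((↑) : F → G) 1 := fun f hf =>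
  mem_gap.2 ⟨Pi.single ⟨f, hf⟩ 1, update_le_iff.2 ⟨le_rfl, fun _ _ => zero_le⟩, by simp⟩

lemma map_box_of_isAddFreimanHom {H : ι → ℕ} {B : Set G'} {Y : (ι → ℕ) → G'}
    (hY : IsAddFreimanHom 2 (Set.Iic H) B Y) {m : ι → ℕ} (hm : m ≤ H) :
    Y m = Y 0 + Fintype.linearCombination ℕ (fun j => Y (Pi.single j 1) - Y 0) m := by
  induction hs : ∑ j, m j generalizing m with
  | zero =>
    obtain rfl : m = 0 := funext fun j => by simpa using (sum_eq_zero_iff.1 hs) j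
    simp
  | succ n ih =>
    obtain ⟨j, -, hj⟩ := exists_ne_zero_of_sum_ne_zero (hs.trans_ne n.succ_ne_zero)
    have hj1 : Pi.single j 1 ≤ m :=
      update_le_iff.2 ⟨Nat.one_le_iff_ne_zero.2 hj, fun _ _ => zero_le⟩
    obtain ⟨m', rfl⟩ := exists_add_of_le hj1
    have hm' : m' ≤ H := le_add_self.trans hm
    have key := hY.add_eq_add (a := Pi.single j 1 + m') (b := 0) (c := Pi.single j 1) (d := m')
      hm (zero_le : 0 ≤ H) (hj1.trans hm) hm' (add_zero _)
    have hsum : ∑ j, m' j = n := by simpa [sum_add_distrib, add_comm 1] using hs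
    rw [eq_sub_of_add_eq key, ih hm' hsum, map_add, Fintype.linearCombination_apply_single,
      one_smul]
    abel

lemma image_gap [DecidableEq G'] {a : G} {x : ι → G} {H : ι → ℕ} {B : Set G'} {ψ : G → G'}
    (hψ : IsAddFreimanHom 2 (gap a x H) B ψ) :
    (gap a x H).image ψ = gap (ψ a) (fun j => ψ (a + x j) - ψ a) H := by
  have hY : IsAddFreimanHom 2 (Set.Iic H) B
      (ψ ∘ fun m => a + Fintype.linearCombination ℕ x m) := by
    refine hψ.comp (isAddFreimanHom_two.2 ⟨fun m hm => ?_, fun m _ m' _ k _ k' _ h => ?_⟩)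
    · exact mem_coe.2 (mem_gap.2 ⟨m, hm, rfl⟩)
    · rw [add_add_add_comm, ← map_add, h, map_add, add_add_add_comm]
  rw [gap, gap, image_image]
  refine image_congr fun m hm => ?_
  simpa using map_box_of_isAddFreimanHom hY (m := m) (by simpa using hm)

lemma exists_gap_subset_of_isAddFreimanIso [DecidableEq G'] {A : Finset G} {B : Finset G'}
    {φ : G → G'} {k l : ℕ} (hφ : IsAddFreimanIso (2 * (k + l)) A B φ) {a : G} {x : ι → G}
    {H : ι → ℕ} (hgap : gap a x H ⊆ k • A - l • A) :
    ∃ (b : G') (y : ι → G'), gap b y H ⊆ k • B - l • B ∧ #(gap b y H) = #(gap a x H) := by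
  obtain ⟨ψ, hψ⟩ := exists_isAddFreimanIso_nsmul_sub_nsmul two_ne_zero hφ
  have hsub : (gap a x H : Set G) ⊆ k • ↑A - l • ↑A := by exact_mod_cast hgap
  have hmaps := hψ.bijOn.mapsTo.mono_left hsub
  refine ⟨ψ a, fun j => ψ (a + x j) - ψ a, ?_⟩
  rw [← image_gap (hψ.isAddFreimanHom.subset hsub hmaps),
    card_image_of_injOn (hψ.bijOn.injOn.mono hsub)]
  exact ⟨image_subset_iff.2 fun g hg => by exact_mod_cast hmaps hg, rfl⟩

end Progression

section Bohr

open Metric Module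

lemma coe_eq_coe_unitAddCircle_iff {a b : ℝ} :
    (a : UnitAddCircle) = b ↔ ∃ z : ℤ, a = b + z := by
  rw [← sub_eq_zero, ← AddCircle.coe_sub, AddCircle.coe_eq_zero_iff]
  refine exists_congr fun z => ?_
  rw [zsmul_one, eq_comm, sub_eq_iff_eq_add']

lemma exists_coe_eq_abs_eq_norm (t : UnitAddCircle) :
    ∃ a : ℝ, (a : UnitAddCircle) = t ∧ |a| = ‖t‖ := by
  obtain ⟨a, rfl⟩ := QuotientAddGroup.mk_surjective t
  exact ⟨a - round a, coe_eq_coe_unitAddCircle_iff.2 ⟨-round a, by push_cast; ring⟩,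
    UnitAddCircle.norm_eq.symm⟩

lemma re_toCircle_nonneg {t : UnitAddCircle} (ht : ‖t‖ ≤ 1 / 4) : 0 ≤ (t.toCircle : ℂ).re := by
  obtain ⟨a, rfl, ha⟩ := exists_coe_eq_abs_eq_norm t
  obtain ⟨hl, hu⟩ := abs_le.1 (ha.trans_le ht)
  rw [AddCircle.toCircle_apply_mk, Circle.coe_exp, Complex.exp_ofReal_mul_I_re, div_one]
  apply Real.cos_nonneg_of_neg_pi_div_two_le_of_le <;> nlinarith [Real.pi_pos]

lemma finite_abs_le_coe_eq (r : ℝ) (t : UnitAddCircle) :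
    {a : ℝ | |a| ≤ r ∧ (a : UnitAddCircle) = t}.Finite := by
  obtain ⟨b, rfl⟩ := QuotientAddGroup.mk_surjective t
  refine ((Set.finite_Icc ⌈-r - b⌉ ⌊r - b⌋).image fun z : ℤ => b + z).subset ?_
  rintro a ⟨har, hab⟩
  obtain ⟨z, rfl⟩ := coe_eq_coe_unitAddCircle_iff.1 hab
  obtain ⟨hl, hu⟩ := abs_le.1 har
  exact ⟨z, ⟨Int.ceil_le.2 (by linarith), Int.le_floor.2 (by linarith)⟩, rfl⟩

variable {ι : Type*}

/-- The reduction of a vector modulo `1`, coordinate by coordinate. The preimage of a finite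
subgroup of the torus is a lattice, whose short vectors give the points of a Bohr set. -/
def toTorus : EuclideanSpace ℝ ι →+ (ι → UnitAddCircle) where
  toFun y i := y i
  map_zero' := rfl
  map_add' _ _ := rfl

lemma toTorus_apply (y : EuclideanSpace ℝ ι) (i : ι) : toTorus y i = (y i : UnitAddCircle) := rfl

variable [Fintype ι]

lemma abs_apply_le_norm (y : EuclideanSpace ℝ ι) (i : ι) : |y i| ≤ ‖y‖ :=
  PiLp.norm_apply_le y i

lemma norm_toTorus_apply_le (y : EuclideanSpace ℝ ι) (i : ι) : ‖toTorus y i‖ ≤ ‖y‖ := by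
  rw [toTorus_apply, UnitAddCircle.norm_eq]
  have hround : |y i - round (y i)| ≤ |y i| := by simpa using round_le (y i) 0
  exact hround.trans (abs_apply_le_norm y i)

lemma injOn_toTorus : Set.InjOn toTorus (closedBall (0 : EuclideanSpace ℝ ι) (1 / 4)) := by
  intro y hy z hz hyz
  rw [mem_closedBall_zero_iff] at hy hz
  ext i
  obtain ⟨k, hk⟩ := coe_eq_coe_unitAddCircle_iff.1 (congrFun hyz i)
  have hlt : |(k : ℝ)| < 1 := by
    rw [eq_sub_of_add_eq' hk.symm]
    linarith [abs_sub (y i) (z i), abs_apply_le_norm y i, abs_apply_le_norm z i]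
  rw [hk, Int.abs_lt_one_iff.1 (by exact_mod_cast hlt : |k| < 1), Int.cast_zero, add_zero]

lemma finite_comap_toTorus_inter_closedBall {S : AddSubgroup (ι → UnitAddCircle)}
    (hS : (S : Set (ι → UnitAddCircle)).Finite) (r : ℝ) :
    ((S.comap toTorus : Set (EuclideanSpace ℝ ι)) ∩ closedBall 0 r).Finite := by
  refine (hS.biUnion fun t _ => (Set.Finite.pi' fun i => finite_abs_le_coe_eq r (t i)).image
    (WithLp.toLp 2)).subset ?_
  rintro y ⟨hyS, hyr⟩
  rw [mem_closedBall_zero_iff] at hyr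
  exact Set.mem_biUnion hyS ⟨y.ofLp, fun i => ⟨(abs_apply_le_norm y i).trans hyr, rfl⟩, rfl⟩

lemma exists_toTorus_eq_norm_le (t : ι → UnitAddCircle) :
    ∃ y, toTorus y = t ∧ ‖y‖ ≤ 2 ^ (Fintype.card ι + 1) * (1 / 4) := by
  choose y hy hnorm using fun i => exists_coe_eq_abs_eq_norm (t i)
  have hle (i) : |y i| ≤ 1 / 2 := by
    simpa [hnorm i] using AddCircle.norm_le_half_period (x := t i) 1 one_ne_zero
  refine ⟨WithLp.toLp 2 y, funext hy, ?_⟩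
  rw [← pow_le_pow_iff_left₀ (norm_nonneg _) (by positivity) two_ne_zero,
    EuclideanSpace.norm_sq_eq]
  calc ∑ i, ‖y i‖ ^ 2 ≤ ∑ _ : ι, (1 / 2 : ℝ) ^ 2 :=
        sum_le_sum fun _ _ => pow_le_pow_left₀ (norm_nonneg _) (hle _) 2
    _ = Fintype.card ι / 4 := by norm_num [div_eq_mul_inv]
    _ ≤ 4 ^ Fintype.card ι / 4 := by
        gcongr
        exact_mod_cast (Nat.lt_pow_self (by norm_num : 1 < 4)).le
    _ = _ := by
        rw [mul_pow, ← pow_mul, mul_comm _ 2, pow_mul, pow_succ]; norm_num; ring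

lemma norm_linearCombination_nat_le {V : Type*} [NormedAddCommGroup V] [NormedSpace ℝ V]
    (w : ι → V) {m H : ι → ℕ} (hm : m ≤ H) :
    ‖Fintype.linearCombination ℕ w m‖ ≤ ∑ j, (H j : ℝ) * ‖w j‖ := by
  rw [Fintype.linearCombination_apply]
  refine (norm_sum_le _ _).trans (sum_le_sum fun j _ => (norm_nsmul_le).trans ?_)
  gcongr
  exact hm j

lemma map_linearCombination_nat {G G' : Type*} [AddCommGroup G] [AddCommGroup G'] (f : G →+ G')
    (x : ι → G) (m : ι → ℕ) :
    f (Fintype.linearCombination ℕ x m) = Fintype.linearCombination ℕ (f ∘ x) m := by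
  simp [Fintype.linearCombination_apply]

variable {G : Type*} [AddCommGroup G] [Fintype G] {θ : G →+ ι → UnitAddCircle}

lemma card_le_ncard_comap_toTorus (hθ : Function.Injective θ) :
    Fintype.card G ≤ ((θ.range.comap toTorus : Set (EuclideanSpace ℝ ι)) ∩
      closedBall 0 (2 ^ (Fintype.card ι + 1) * (1 / 4))).ncard := by
  choose y hy hnorm using fun g => exists_toTorus_eq_norm_le (θ g)
  have hinj : Function.Injective y := fun g g' h => hθ (by rw [← hy g, h, hy g'])
  rw [← Nat.card_eq_fintype_card, ← Set.ncard_univ, ← Set.ncard_image_of_injective _ hinj]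
  refine Set.ncard_le_ncard ?_ (finite_comap_toTorus_inter_closedBall (Set.finite_range θ) _)
  rintro _ ⟨g, -, rfl⟩
  exact ⟨⟨g, (hy g).symm⟩, mem_closedBall_zero_iff.2 (hnorm g)⟩

lemma exists_gap_subset_bohrSet [DecidableEq G] (hθ : Function.Injective θ) :
    ∃ (d : ℕ) (x : Fin d → G) (H : Fin d → ℕ), d ≤ Fintype.card ι ∧
      Fintype.card G ≤ 5000 ^ Fintype.card ι ^ 2 * #(gap 0 x H) ∧
      ∀ g ∈ gap 0 x H, ∀ i, ‖θ g i‖ ≤ 1 / 4 := by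
  have hfin := finite_comap_toTorus_inter_closedBall (S := θ.range) (Set.finite_range θ)
  obtain ⟨d, w, H, hindep, hw, hsum, hcard⟩ :=
    exists_linearIndependent_ncard_le _ hfin (r := 1 / 4) (by norm_num)
  choose x hx using hw
  have hlift (m : Fin d → ℕ) :
      θ (Fintype.linearCombination ℕ x m) = toTorus (Fintype.linearCombination ℕ w m) := by
    rw [map_linearCombination_nat, map_linearCombination_nat, Function.comp_def, funext hx]; rfl
  have hball {m : Fin d → ℕ} (hm : m ≤ H) : ‖Fintype.linearCombination ℕ w m‖ ≤ 1 / 4 :=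
    (norm_linearCombination_nat_le w hm).trans hsum
  have hproper : Set.InjOn (Fintype.linearCombination ℕ x) (Set.Iic H) := fun m hm m' hm' h =>
    linearIndependent_iff_injective_fintypeLinearCombination.1 (hindep.restrict_scalars' ℕ) <|
      injOn_toTorus (mem_closedBall_zero_iff.2 (hball hm)) (mem_closedBall_zero_iff.2 (hball hm'))
        (by rw [← hlift, h, hlift])
  refine ⟨d, x, H, ?_, ?_, fun g hg i => ?_⟩
  · simpa using hindep.fintype_card_le_finrank
  · set n := Fintype.card ι
    have hrank : finrank ℝ (EuclideanSpace ℝ ι) = n := finrank_euclideanSpace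
    have hspan := hrank ▸ Submodule.finrank_le
      (Submodule.span ℝ (θ.range.comap toTorus : Set (EuclideanSpace ℝ ι)))
    have hdouble := ncard_inter_closedBall_two_pow_mul_le hfin (r := 1 / 4) (by norm_num) (n + 1)
    rw [hrank] at hcard hdouble
    calc Fintype.card G ≤ _ := card_le_ncard_comap_toTorus hθ
      _ ≤ _ := hdouble.trans (Nat.mul_le_mul_left _ hcard)
      _ ≤ (5 ^ n) ^ (n + 1) * ((8 * 25 ^ n) ^ n * ∏ j, (H j + 1)) := by
        gcongr
        exact Nat.mul_pos (by norm_num) (by positivity)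
      _ = (5 * 8) ^ n * (5 * 25) ^ n ^ 2 * #(gap 0 x H) := by
        rw [card_gap hproper, mul_pow 5 8, mul_pow 5 25]
        ring
      _ ≤ 5000 ^ n ^ 2 * #(gap 0 x H) := by
        rw [show 5000 = 5 * 8 * (5 * 25) by rfl, mul_pow (5 * 8)]
        gcongr
        · norm_num
        · exact Nat.le_self_pow two_ne_zero n
  · obtain ⟨m, hm, rfl⟩ := mem_gap.1 hg
    rw [zero_add, hlift]
    exact (norm_toTorus_apply_le _ i).trans (hball hm)

end Bohr

section ZMod

lemma exists_gap_subset_two_nsmul_sub_two_nsmul_zmod {N : ℕ} [NeZero N] {T : Finset (ZMod N)}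
    (hT : T.Nonempty) {L : ℕ} (hL : 2 * N ^ 2 ≤ L * #T ^ 2) :
    ∃ (d : ℕ) (x : Fin d → ZMod N) (H : Fin d → ℕ), d ≤ L + 1 ∧
      N ≤ 5000 ^ (L + 1) ^ 2 * #(gap 0 x H) ∧ gap 0 x H ⊆ 2 • T - 2 • T := by
  obtain ⟨Λ, hΛ, hmem⟩ := exists_finset_addChar_mem_two_nsmul_sub_two_nsmul hT
  have hΛL : #Λ ≤ L := by
    rw [ZMod.card] at hΛ
    refine Nat.le_of_mul_le_mul_right (le_trans ?_ hL) (pow_pos hT.card_pos 2)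
    exact_mod_cast hΛ
  -- The extra coordinate `none` makes `θ` injective.
  let θ : ZMod N →+ Option Λ → UnitAddCircle := AddMonoidHom.pi fun o =>
    o.elim ZMod.toAddCircle fun γ =>
      ZMod.toAddCircle.comp (AddMonoidHom.mulLeft (AddChar.zmodAddEquiv.symm (γ : AddChar _ ℂ)))
  have hθ : Function.Injective θ := fun g g' h => ZMod.toAddCircle_injective N (congrFun h none)
  have hθΛ (γ : Λ) (g : ZMod N) : (γ : AddChar (ZMod N) ℂ) g = (θ g (some γ)).toCircle := by
    conv_lhs => rw [← AddChar.zmodAddEquiv.apply_symm_apply (γ : AddChar (ZMod N) ℂ)]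
    rfl
  obtain ⟨d, x, H, hd, hN, hbohr⟩ := exists_gap_subset_bohrSet hθ
  rw [Fintype.card_option, Fintype.card_coe] at hd hN
  refine ⟨d, x, H, by omega, ?_, fun g hg => hmem g fun γ hγ => ?_⟩
  · rw [ZMod.card] at hN
    refine hN.trans ?_
    gcongr
    norm_num
  · rw [hθΛ ⟨γ, hγ⟩]
    exact re_toCircle_nonneg (hbohr g hg _)

theorem exists_gap_subset_two_nsmul_sub_two_nsmul {p : ℕ} [Fact p.Prime] {A : Finset (ZMod p)}
    (hA : A.Nonempty) {L : ℕ} (hL : 128 * #(8 • A - 8 • A) ^ 2 ≤ L * #A ^ 2) :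
    ∃ (d : ℕ) (b : ZMod p) (x : Fin d → ZMod p) (H : Fin d → ℕ), d ≤ L + 1 ∧
      #A ≤ 5000 ^ (L + 1) ^ 2 * #(gap b x H) ∧ gap b x H ⊆ 2 • A - 2 • A := by
  set N := #(8 • A - 8 • A)
  have hAN : #A ≤ N := card_le_card_nsmul_sub_nsmul hA (by norm_num) 8
  have : NeZero N := ⟨(hA.card_pos.trans_le hAN).ne'⟩
  obtain ⟨A', hA'A, hcard, φ, hφ⟩ := exists_isAddFreimanIso_zmod hA (by norm_num : 8 ≠ 0) le_rfl
  have hA' : A'.Nonempty := by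
    rw [← card_pos]
    have := hA.card_pos
    omega
  have hT : #(A'.image φ) = #A' := card_image_of_injOn hφ.bijOn.injOn
  obtain ⟨d, x, H, hd, hNgap, hgap⟩ := exists_gap_subset_two_nsmul_sub_two_nsmul_zmod (N := N)
    (hA'.image φ) (L := L) <| by
      rw [hT]
      have : 64 * (2 * N ^ 2) ≤ 64 * (L * #A' ^ 2) := by
        calc 64 * (2 * N ^ 2) = 128 * N ^ 2 := by ring
          _ ≤ L * (8 * #A') ^ 2 := hL.trans (by gcongr)
          _ = _ := by ring
      omega
  rw [← coe_image] at hφ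
  obtain ⟨b, y, hsub, hcardgap⟩ := exists_gap_subset_of_isAddFreimanIso hφ.invFunOn hgap
  exact ⟨d, b, y, H, hd, hcardgap ▸ hAN.trans hNgap, hsub.trans (by gcongr)⟩

end ZMod

section FreimanRuzsa

variable {G : Type*} [AddCommGroup G] [DecidableEq G]

lemma exists_gap_eq_add_gap_sub_gap (F : Finset G) {d : ℕ} (b : G) (x : Fin d → G)
    (H : Fin d → ℕ) :
    ∃ (a : G) (y : Fin (#F + d) → G) (H' : Fin (#F + d) → ℕ),
      gap a y H' = gap 0 ((↑) : F → G) 1 + (gap b x H - gap b x H) := by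
  let e : Fin (#F + d) ≃ F ⊕ Fin d :=
    finSumFinEquiv.symm.trans (F.equivFin.symm.sumCongr (.refl (Fin d)))
  rw [gap_sub_gap, gap_add_gap, ← gap_reindex e]
  exact ⟨_, _, _, rfl⟩

lemma exists_gap_superset_of_gap_subset {A : Finset G} (hA : A.Nonempty) {K c : ℝ}
    (hK : (#(A + A) : ℝ) ≤ K * #A) {d : ℕ} {b : G} {x : Fin d → G} {H : Fin d → ℕ}
    (hQ : gap b x H ⊆ 2 • A - 2 • A) (hc : #A ≤ c * #(gap b x H)) :
    ∃ (e : ℕ) (a : G) (y : Fin e → G) (H' : Fin e → ℕ), e ≤ K ^ 5 * c + d ∧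
      A ⊆ gap a y H' ∧ #(gap a y H') ≤ Real.exp (K ^ 5 * c + K ^ 8) * #A := by
  set Q := gap b x H
  have hK0 := pos_of_card_add_le hA hK
  have hAQ : (#(A + Q) : ℝ) ≤ K ^ 5 * c * #Q := by
    calc (#(A + Q) : ℝ) ≤ #(3 • A - 2 • A) := by
          rw [succ_nsmul' A 2, add_sub_assoc]
          gcongr
      _ ≤ K ^ 5 * #A := card_nsmul_sub_nsmul_le hA hK 3 2
      _ ≤ K ^ 5 * c * #Q := by
          rw [mul_assoc]
          gcongr
  have hQQ : (#(Q - Q) : ℝ) ≤ K ^ 8 * #A := by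
    have hsub : Q - Q ⊆ 4 • A - 4 • A := by
      refine (sub_subset_sub hQ hQ).trans_eq ?_
      simp only [sub_sub_eq_add_sub, sub_add_eq_add_sub, sub_sub, ← add_nsmul, Nat.reduceAdd]
    exact (Nat.cast_le.2 (card_le_card hsub)).trans (card_nsmul_sub_nsmul_le hA hK 4 4)
  obtain ⟨F, -, hF, hcover⟩ := ruzsa_covering_add ⟨_, mem_gap.2 ⟨0, zero_le, rfl⟩⟩ hAQ
  obtain ⟨a, y, H', hgap⟩ := exists_gap_eq_add_gap_sub_gap F b x H
  have hbox : #(gap 0 ((↑) : F → G) 1) ≤ 2 ^ #F := by simpa using card_gap_le 0 ((↑) : F → G) 1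
  refine ⟨#F + d, a, y, H', by push_cast; gcongr, ?_, ?_⟩
  · exact hgap ▸ hcover.trans (add_subset_add_right (subset_gap_coe F))
  · calc (#(gap a y H') : ℝ) ≤ 2 ^ #F * #(Q - Q) := by
          rw [hgap]
          exact_mod_cast card_add_le.trans (Nat.mul_le_mul_right _ hbox)
      _ ≤ Real.exp 1 ^ #F * (Real.exp (K ^ 8) * #A) := by
          gcongr
          · linarith [Real.add_one_le_exp 1]
          · refine hQQ.trans ?_
            gcongr
            linarith [Real.add_one_le_exp (K ^ 8)]
      _ ≤ Real.exp (K ^ 5 * c + K ^ 8) * #A := by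
          rw [← Real.exp_nat_mul, mul_one, ← mul_assoc, ← Real.exp_add]
          gcongr

/-- The number of frequencies that suffice in Bogolyubov's lemma for the model of a set of
doubling `K`. -/
noncomputable def spectrumBound (K : ℝ) : ℕ := ⌈128 * K ^ 32⌉₊

lemma mul_sq_le_spectrumBound_mul_sq {K : ℝ} {m n : ℕ} (h : (m : ℝ) ≤ K ^ 16 * n) :
    128 * m ^ 2 ≤ spectrumBound K * n ^ 2 := by
  rw [← Nat.cast_le (α := ℝ)]
  push_cast
  calc 128 * (m : ℝ) ^ 2 ≤ 128 * (K ^ 16 * n) ^ 2 := by gcongr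
    _ = 128 * K ^ 32 * n ^ 2 := by ring
    _ ≤ spectrumBound K * n ^ 2 := by
      gcongr
      exact Nat.le_ceil _

/-- The function `C` of the theorem, bounding the dimension and the logarithm of the relative size
of the progression. -/
noncomputable def freimanConst (K : ℝ) : ℝ :=
  K ^ 5 * 5000 ^ (spectrumBound K + 1) ^ 2 + K ^ 8 + (spectrumBound K + 1)

theorem exists_gap_superset_of_card_add_le {p : ℕ} [Fact p.Prime] {A : Finset (ZMod p)}
    (hA : A.Nonempty) {K : ℝ} (hK : (#(A + A) : ℝ) ≤ K * #A) :
    ∃ (d : ℕ) (a : ZMod p) (x : Fin d → ZMod p) (H : Fin d → ℕ), d ≤ freimanConst K ∧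
      A ⊆ gap a x H ∧ #(gap a x H) ≤ Real.exp (freimanConst K) * #A := by
  have hL : 128 * #(8 • A - 8 • A) ^ 2 ≤ spectrumBound K * #A ^ 2 :=
    mul_sq_le_spectrumBound_mul_sq (card_nsmul_sub_nsmul_le hA hK 8 8)
  obtain ⟨d, b, x, H, hd, hcard, hsub⟩ := exists_gap_subset_two_nsmul_sub_two_nsmul hA hL
  obtain ⟨e, a, y, H', he, hmem, hle⟩ := exists_gap_superset_of_gap_subset hA hK hsub
    (c := 5000 ^ (spectrumBound K + 1) ^ 2) (by exact_mod_cast hcard)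
  have hK8 : 0 ≤ K ^ 8 := by positivity
  have hd' : (d : ℝ) ≤ spectrumBound K + 1 := by exact_mod_cast hd
  refine ⟨e, a, y, H', he.trans ?_, hmem, hle.trans ?_⟩ <;> unfold freimanConst
  · linarith
  · refine mul_le_mul_of_nonneg_right (Real.exp_le_exp.2 ?_) (Nat.cast_nonneg _)
    linarith [Nat.cast_nonneg (α := ℝ) (spectrumBound K)]

end FreimanRuzsa

theorem stmt_18 :
    ∃ C : ℝ → ℝ,
      ∀ (K : ℝ), 1 ≤ K →
        ∀ (p : ℕ), p.Prime →
          ∀ A : Finset (ZMod p), A.Nonempty →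
            ((A + A).card : ℝ) ≤ K * A.card →
            ∃ (d : ℕ) (a₀ : ZMod p) (a : Fin d → ZMod p) (H : Fin d → ℕ),
              (∀ j, 1 ≤ H j) ∧ (d : ℝ) ≤ C K ∧
              (let P : Finset (ZMod p) :=
                (Fintype.piFinset fun j => Finset.range (H j)).image
                  (fun x => a₀ + ∑ j, (x j : ZMod p) * a j)
               A ⊆ P ∧ (P.card : ℝ) ≤ Real.exp (C K) * A.card) := by
  refine ⟨freimanConst, fun K _ p hp A hA hdouble => ?_⟩
  have : Fact p.Prime := ⟨hp⟩
  obtain ⟨d, a₀, a, H, hd, hsub, hcard⟩ :=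
    exists_gap_superset_of_card_add_le hA hdouble
  refine ⟨d, a₀, a, fun j => H j + 1, fun j => Nat.le_add_left 1 (H j), hd, ?_⟩
  simp only [← nsmul_eq_mul, ← gap_eq_image_piFinset]
  exact ⟨hsub, hcard⟩
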